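/- For all x ∈ (0,∞), the inequality [ψ'(x)]² + ψ''(x) < (36 + 180x + 408x² + 504x³ + 352x⁴ + 132x⁵ + 21x⁶)/(36x⁴(1+x)⁶) holds. -/

import Mathlib

/-- The digamma function `ψ(x) = Γ'(x)/Γ(x)`. -/
noncomputable def digamma (x : ℝ) : ℝ := deriv Real.Gamma x / Real.Gamma x

/-!
Convexity of `log Γ` gives `log x - 1/x ≤ ψ(x) ≤ log x`, so `ψ(x + n) - ψ(y + n) → 0`, and the
recurrence `ψ(x + 1) = ψ(x) + 1/x` then yields `ψ(x) - ψ(y) = ∑ (1/(y + n) - 1/(x + n))`.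
Differentiating termwise, `ψ'(x) = ∑ 1/(x + n)²` and `ψ''(x) = -∑ 2/(x + n)³`. Comparing these
series with telescoping ones gives `ψ'(z) ≤ 1/z + 1/(2z²) + 1/(6z³)` and `ψ''(z) ≤ -(1/z² + 1/z³)`.
Used at `z = 1 + x`, after splitting off the first terms `1/x²` and `-2/x³`, these bounds leave a
rational inequality with positive coefficients.
-/

open Filter Topology Real Set

section Series

theorem hasSum_le_sub_of_le_sub_add_one {E : Type*} [AddCommGroup E] [PartialOrder E]
    [IsOrderedAddMonoid E] [TopologicalSpace E] [OrderClosedTopology E] [ContinuousSub E]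
    {f g : ℝ → E} {x : ℝ} {s l : E} (hf : HasSum (fun n : ℕ ↦ f (x + n)) s)
    (hg : Tendsto g atTop (𝓝 l)) (hfg : ∀ y, x ≤ y → f y ≤ g y - g (y + 1)) : s ≤ g x - l := by
  have hshift : Tendsto (fun n : ℕ ↦ x + n) atTop atTop :=
    tendsto_atTop_add_const_left _ _ tendsto_natCast_atTop_atTop
  refine le_of_tendsto_of_tendsto' hf.tendsto_sum_nat ((hg.comp hshift).const_sub (g x)) fun N ↦ ?_
  calc ∑ n ∈ Finset.range N, f (x + n)
      ≤ ∑ n ∈ Finset.range N, (g (x + n) - g (x + (n + 1 : ℕ))) := by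
        refine Finset.sum_le_sum fun n _ ↦ (hfg _ (by simp)).trans_eq ?_
        rw [Nat.cast_add_one, add_assoc]
    _ = g x - g (x + N) := by
        rw [Finset.sum_range_sub' fun n : ℕ ↦ g (x + n)]
        simp only [Nat.cast_zero, add_zero]

theorem tendsto_one_div_const_mul_pow_atTop {c : ℝ} {k : ℕ} (hc : 0 < c) (hk : k ≠ 0) :
    Tendsto (fun x : ℝ ↦ 1 / (c * x ^ k)) atTop (𝓝 0) := by
  simpa only [one_div] using!
    tendsto_inv_atTop_zero.comp ((tendsto_pow_atTop hk).const_mul_atTop hc)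

theorem summable_one_div_add_nat_pow {k : ℕ} (hk : 1 < k) (x : ℝ) :
    Summable fun n : ℕ ↦ 1 / (x + n) ^ k := by
  have h := (Real.summable_one_div_nat_add_rpow x k).2 (by exact_mod_cast hk)
  refine Summable.of_norm (h.congr fun n ↦ ?_)
  rw [Real.rpow_natCast, norm_div, norm_pow, norm_one, Real.norm_eq_abs, add_comm]

theorem tsum_one_div_add_nat_pow_eq_zero_add {k : ℕ} (hk : 1 < k) (x : ℝ) :
    ∑' n : ℕ, 1 / (x + n) ^ k = 1 / x ^ k + ∑' n : ℕ, 1 / (x + 1 + n) ^ k := by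
  rw [(summable_one_div_add_nat_pow hk x).tsum_eq_zero_add]
  simp only [Nat.cast_zero, Nat.cast_add_one, add_zero, add_assoc, add_comm (1 : ℝ)]

theorem summable_one_div_add_nat_sub_one_div_add_nat {x y : ℝ} (hx : 0 < x) (hy : 0 < y) :
    Summable fun n : ℕ ↦ 1 / (y + n) - 1 / (x + n) := by
  obtain ⟨b, hb, hbxy⟩ := exists_between (lt_min hx hy)
  obtain ⟨hbx, hby⟩ := lt_min_iff.1 hbxy
  refine .of_norm_bounded ((summable_one_div_add_nat_pow one_lt_two b).mul_left |x - y|) fun n ↦ ?_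
  have hdiff : 1 / (y + n) - 1 / (x + n) = (x - y) * (1 / ((x + n) * (y + n))) := by
    field_simp
    ring
  rw [hdiff, norm_mul, Real.norm_eq_abs, Real.norm_of_nonneg (by positivity), sq]
  gcongr

theorem hasDerivAt_const_sub_one_div_add_pow (c a : ℝ) (k : ℕ) {x : ℝ} (hx : x + a ≠ 0) :
    HasDerivAt (fun y ↦ c - 1 / (y + a) ^ k) (k * (1 / (x + a) ^ (k + 1))) x := by
  have h := ((((hasDerivAt_id' x).add_const a).fun_pow k).fun_inv (pow_ne_zero k hx)).const_sub c
  simp only [one_div]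
  convert! h using 1
  cases k with
  | zero => simp
  | succ k =>
    rw [Nat.add_sub_cancel]
    field_simp
    ring

-- The constants `c n` allow for `k = 1`, where the series `∑ 1/(a + n)` itself diverges.
theorem hasDerivAt_tsum_const_sub_one_div_add_nat_pow {c : ℕ → ℝ} {k : ℕ} (hk : 0 < k) {a x : ℝ}
    (ha : 0 < a) (hx : 0 < x) (hc : Summable fun n : ℕ ↦ c n - 1 / (a + n) ^ k) :
    HasDerivAt (fun y ↦ ∑' n : ℕ, (c n - 1 / (y + n) ^ k))
      (k * ∑' n : ℕ, 1 / (x + n) ^ (k + 1)) x := by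
  obtain ⟨b, hb, hbax⟩ := exists_between (lt_min ha hx)
  obtain ⟨hba, hbx⟩ := lt_min_iff.1 hbax
  rw [← tsum_mul_left]
  refine hasDerivAt_tsum_of_isPreconnected
    (g' := fun (n : ℕ) (y : ℝ) ↦ (k : ℝ) * (1 / (y + n) ^ (k + 1)))
    ((summable_one_div_add_nat_pow (by omega : 1 < k + 1) b).mul_left (k : ℝ))
    isOpen_Ioi isPreconnected_Ioi (fun n y hy ↦ ?_) (fun n y hy ↦ ?_) (mem_Ioi.2 hba) hc
    (mem_Ioi.2 hbx)
  all_goals have hy₀ : 0 < y := hb.trans hy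
  · exact hasDerivAt_const_sub_one_div_add_pow (c n) n k (by positivity)
  · rw [Real.norm_of_nonneg (by positivity)]
    gcongr
    exact le_of_lt hy

end Series

section Digamma

variable {x y : ℝ}

theorem differentiableAt_Gamma_of_pos (hx : 0 < x) : DifferentiableAt ℝ Gamma x :=
  differentiableAt_Gamma fun m ↦ ((neg_nonpos.2 m.cast_nonneg).trans_lt hx).ne'

theorem hasDerivAt_log_Gamma (hx : 0 < x) : HasDerivAt (log ∘ Gamma) (digamma x) x :=
  (differentiableAt_Gamma_of_pos hx).hasDerivAt.log (Gamma_pos_of_pos hx).ne'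

theorem log_Gamma_add_one (hx : 0 < x) : log (Gamma (x + 1)) = log (Gamma x) + log x := by
  rw [Gamma_add_one hx.ne', log_mul hx.ne' (Gamma_pos_of_pos hx).ne', add_comm]

theorem slope_log_Gamma_add_one (hx : 0 < x) : slope (log ∘ Gamma) x (x + 1) = log x := by
  simp [slope_def_field, log_Gamma_add_one hx]

theorem digamma_add_one (hx : 0 < x) : digamma (x + 1) = digamma x + 1 / x := by
  have hleft : HasDerivAt (fun y ↦ log (Gamma (y + 1))) (digamma (x + 1)) x :=
    (hasDerivAt_log_Gamma (by positivity)).comp_add_const x 1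
  have hright := (hasDerivAt_log_Gamma hx).add (hasDerivAt_log hx.ne')
  rw [one_div]
  refine hleft.unique (hright.congr_of_eventuallyEq ?_)
  filter_upwards [eventually_gt_nhds hx] with y hy using log_Gamma_add_one hy

theorem digamma_le_log (hx : 0 < x) : digamma x ≤ log x :=
  (convexOn_log_Gamma.le_slope_of_hasDerivAt hx (mem_Ioi.2 (by positivity)) (lt_add_one x)
    (hasDerivAt_log_Gamma hx)).trans_eq (slope_log_Gamma_add_one hx)

theorem log_sub_one_div_le_digamma (hx : 0 < x) : log x - 1 / x ≤ digamma x := by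
  have hx₁ : 0 < x + 1 := by positivity
  have h := convexOn_log_Gamma.slope_le_of_hasDerivAt hx hx₁ (lt_add_one x)
    (hasDerivAt_log_Gamma hx₁)
  rwa [slope_log_Gamma_add_one hx, digamma_add_one hx, ← sub_le_iff_le_add] at h

theorem tendsto_digamma_sub_log_atTop : Tendsto (fun x ↦ digamma x - log x) atTop (𝓝 0) := by
  have hlow : Tendsto (fun x : ℝ ↦ -(1 / x)) atTop (𝓝 0) := by
    simpa only [one_div, neg_zero] using! (tendsto_inv_atTop_zero (𝕜 := ℝ)).neg
  refine tendsto_of_tendsto_of_tendsto_of_le_of_le' hlow tendsto_const_nhds ?_ ?_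
  · filter_upwards [eventually_gt_atTop 0] with x hx
    linarith [log_sub_one_div_le_digamma hx]
  · filter_upwards [eventually_gt_atTop 0] with x hx
    exact sub_nonpos.2 (digamma_le_log hx)

theorem tendsto_digamma_add_sub_digamma_atTop (a : ℝ) :
    Tendsto (fun x ↦ digamma (x + a) - digamma x) atTop (𝓝 0) := by
  have hshift := tendsto_digamma_sub_log_atTop.comp
    (tendsto_atTop_add_const_right atTop a tendsto_id)
  have h := (hshift.sub tendsto_digamma_sub_log_atTop).add (tendsto_log_comp_add_sub_log a)
  rw [sub_zero, add_zero] at h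
  refine h.congr fun x ↦ ?_
  simp only [Function.comp_apply, id]
  ring

theorem sum_range_one_div_add_nat (hx : 0 < x) (N : ℕ) :
    ∑ n ∈ Finset.range N, 1 / (x + n) = digamma (x + N) - digamma x := by
  induction N with
  | zero => simp
  | succ N ih =>
    rw [Finset.sum_range_succ, ih, Nat.cast_add_one, ← add_assoc, digamma_add_one (by positivity)]
    ring

theorem hasSum_digamma_sub_digamma (hx : 0 < x) (hy : 0 < y) :
    HasSum (fun n : ℕ ↦ 1 / (y + n) - 1 / (x + n)) (digamma x - digamma y) := by
  rw [(summable_one_div_add_nat_sub_one_div_add_nat hx hy).hasSum_iff_tendsto_nat]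
  have hshift : Tendsto (fun N : ℕ ↦ y + N) atTop atTop :=
    tendsto_atTop_add_const_left _ _ tendsto_natCast_atTop_atTop
  have h := ((tendsto_digamma_add_sub_digamma_atTop (x - y)).comp hshift).const_sub
    (digamma x - digamma y)
  rw [sub_zero] at h
  refine h.congr fun N ↦ ?_
  rw [Finset.sum_sub_distrib, sum_range_one_div_add_nat hx, sum_range_one_div_add_nat hy,
    Function.comp_apply, show y + N + (x - y) = x + N by ring]
  ring

theorem deriv_digamma (hx : 0 < x) : deriv digamma x = ∑' n : ℕ, 1 / (x + n) ^ 2 := by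
  have hseries := (hasDerivAt_tsum_const_sub_one_div_add_nat_pow (c := fun n ↦ 1 / (1 + (n : ℝ)))
    one_pos one_pos hx (by simp)).add_const (digamma 1)
  have heq : digamma =ᶠ[𝓝 x]
      fun y ↦ ∑' n : ℕ, (1 / (1 + (n : ℝ)) - 1 / (y + n) ^ 1) + digamma 1 := by
    filter_upwards [eventually_gt_nhds hx] with y hy
    simp only [pow_one, (hasSum_digamma_sub_digamma hy one_pos).tsum_eq, sub_add_cancel]
  simpa only [Nat.cast_one, one_mul] using (hseries.congr_of_eventuallyEq heq).deriv

theorem deriv_deriv_digamma (hx : 0 < x) :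
    deriv (deriv digamma) x = -(2 * ∑' n : ℕ, 1 / (x + n) ^ 3) := by
  have hseries := (hasDerivAt_tsum_const_sub_one_div_add_nat_pow (c := 0) two_pos one_pos hx
    (by simpa using (summable_one_div_add_nat_pow one_lt_two 1).neg)).fun_neg
  have heq : deriv digamma =ᶠ[𝓝 x] fun y ↦ -∑' n : ℕ, ((0 : ℕ → ℝ) n - 1 / (y + n) ^ 2) := by
    filter_upwards [eventually_gt_nhds hx] with y hy
    simp only [deriv_digamma hy, Pi.zero_apply, zero_sub, tsum_neg, neg_neg]
  simpa only [Nat.cast_ofNat] using (hseries.congr_of_eventuallyEq heq).deriv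

theorem deriv_digamma_nonneg (hx : 0 < x) : 0 ≤ deriv digamma x := by
  rw [deriv_digamma hx]
  exact tsum_nonneg fun n ↦ by positivity

theorem deriv_digamma_eq_one_div_sq_add (hx : 0 < x) :
    deriv digamma x = 1 / x ^ 2 + deriv digamma (x + 1) := by
  rw [deriv_digamma hx, deriv_digamma (by positivity),
    tsum_one_div_add_nat_pow_eq_zero_add one_lt_two]

theorem deriv_deriv_digamma_eq_neg_add (hx : 0 < x) :
    deriv (deriv digamma) x = -(2 / x ^ 3) + deriv (deriv digamma) (x + 1) := by
  rw [deriv_deriv_digamma hx, deriv_deriv_digamma (by positivity),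
    tsum_one_div_add_nat_pow_eq_zero_add (by norm_num)]
  ring

end Digamma

section Majorants

/-- The asymptotic expansion of the trigamma function `ψ'` at infinity up to order `z⁻³`, used as
an upper bound for it. -/
noncomputable def trigammaMajorant (z : ℝ) : ℝ := 1 / z + 1 / (2 * z ^ 2) + 1 / (6 * z ^ 3)

/-- The asymptotic expansion of the tetragamma function `ψ''` at infinity up to order `z⁻³`, used
as an upper bound for it. -/
noncomputable def tetragammaMajorant (z : ℝ) : ℝ := -(1 / z ^ 2 + 1 / z ^ 3)

theorem tendsto_trigammaMajorant_atTop : Tendsto trigammaMajorant atTop (𝓝 0) := by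
  have h (c : ℝ) (hc : 0 < c) (k : ℕ) (hk : k ≠ 0) := tendsto_one_div_const_mul_pow_atTop hc hk
  simpa only [pow_one, one_mul, add_zero] using!
    ((h 1 one_pos 1 one_ne_zero).add (h 2 two_pos 2 two_ne_zero)).add
      (h 6 (by norm_num) 3 three_ne_zero)

theorem tendsto_tetragammaMajorant_atTop : Tendsto tetragammaMajorant atTop (𝓝 0) := by
  have h (k : ℕ) (hk : k ≠ 0) := tendsto_one_div_const_mul_pow_atTop one_pos hk
  simpa only [one_mul, add_zero, neg_zero] using!
    ((h 2 two_ne_zero).add (h 3 three_ne_zero)).neg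

variable {z : ℝ}

theorem one_div_sq_le_trigammaMajorant_sub (hz : 0 < z) :
    1 / z ^ 2 ≤ trigammaMajorant z - trigammaMajorant (z + 1) := by
  have hgap : trigammaMajorant z - trigammaMajorant (z + 1) - 1 / z ^ 2 =
      1 / (6 * z ^ 3 * (z + 1) ^ 3) := by
    unfold trigammaMajorant
    field_simp
    ring
  rw [← sub_nonneg, hgap]
  positivity

theorem neg_two_mul_one_div_cube_le_tetragammaMajorant_sub (hz : 0 < z) :
    -(2 * (1 / z ^ 3)) ≤ tetragammaMajorant z - tetragammaMajorant (z + 1) := by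
  have hgap : tetragammaMajorant z - tetragammaMajorant (z + 1) - -(2 * (1 / z ^ 3)) =
      (2 * z + 1) / (z ^ 3 * (z + 1) ^ 3) := by
    unfold tetragammaMajorant
    field_simp
    ring
  rw [← sub_nonneg, hgap]
  positivity

theorem deriv_digamma_le_trigammaMajorant (hz : 0 < z) :
    deriv digamma z ≤ trigammaMajorant z := by
  have h := hasSum_le_sub_of_le_sub_add_one (f := fun y ↦ 1 / y ^ 2)
    (summable_one_div_add_nat_pow one_lt_two z).hasSum tendsto_trigammaMajorant_atTop
    fun y hzy ↦ one_div_sq_le_trigammaMajorant_sub (hz.trans_le hzy)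
  rwa [← deriv_digamma hz, sub_zero] at h

theorem deriv_deriv_digamma_le_tetragammaMajorant (hz : 0 < z) :
    deriv (deriv digamma) z ≤ tetragammaMajorant z := by
  have hsum := summable_one_div_add_nat_pow (by norm_num : 1 < 3) z
  have h := hasSum_le_sub_of_le_sub_add_one (f := fun y ↦ -(2 * (1 / y ^ 3)))
    (hsum.hasSum.mul_left 2).neg tendsto_tetragammaMajorant_atTop
    fun y hzy ↦ neg_two_mul_one_div_cube_le_tetragammaMajorant_sub (hz.trans_le hzy)
  rwa [← deriv_deriv_digamma hz, sub_zero] at h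

theorem sq_trigammaMajorant_add_tetragammaMajorant_lt (hz : 0 < z) :
    (1 / z ^ 2 + trigammaMajorant (z + 1)) ^ 2 + (-(2 / z ^ 3) + tetragammaMajorant (z + 1)) <
      (36 + 180 * z + 408 * z ^ 2 + 504 * z ^ 3 + 352 * z ^ 4 + 132 * z ^ 5 + 21 * z ^ 6) /
        (36 * z ^ 4 * (1 + z) ^ 6) := by
  have hgap :
      (36 + 180 * z + 408 * z ^ 2 + 504 * z ^ 3 + 352 * z ^ 4 + 132 * z ^ 5 + 21 * z ^ 6) /
          (36 * z ^ 4 * (1 + z) ^ 6) -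
        ((1 / z ^ 2 + trigammaMajorant (z + 1)) ^ 2 +
          (-(2 / z ^ 3) + tetragammaMajorant (z + 1))) =
      (1 + 5 * z + 9 * z ^ 2 + 7 * z ^ 3 + 2 * z ^ 4) / (z ^ 3 * (1 + z) ^ 6) := by
    rw [trigammaMajorant, tetragammaMajorant, add_comm z 1]
    field_simp
    ring
  rw [← sub_pos, hgap]
  positivity

end Majorants

theorem stmt_4 (x : ℝ) (hx : x ∈ Set.Ioi (0 : ℝ)) :
    (deriv digamma x) ^ 2 + deriv (deriv digamma) x <
      (36 + 180 * x + 408 * x ^ 2 + 504 * x ^ 3 + 352 * x ^ 4 + 132 * x ^ 5 +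
        21 * x ^ 6) / (36 * x ^ 4 * (1 + x) ^ 6) := by
  have hx₀ : 0 < x := hx
  have hx₁ : 0 < x + 1 := by positivity
  have hψ' : deriv digamma x ≤ 1 / x ^ 2 + trigammaMajorant (x + 1) := by
    rw [deriv_digamma_eq_one_div_sq_add hx₀]
    gcongr
    exact deriv_digamma_le_trigammaMajorant hx₁
  have hψ'' : deriv (deriv digamma) x ≤ -(2 / x ^ 3) + tetragammaMajorant (x + 1) := by
    rw [deriv_deriv_digamma_eq_neg_add hx₀]
    gcongr
    exact deriv_deriv_digamma_le_tetragammaMajorant hx₁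
  calc (deriv digamma x) ^ 2 + deriv (deriv digamma) x
      ≤ (1 / x ^ 2 + trigammaMajorant (x + 1)) ^ 2 +
          (-(2 / x ^ 3) + tetragammaMajorant (x + 1)) :=
        add_le_add (pow_le_pow_left₀ (deriv_digamma_nonneg hx₀) hψ' 2) hψ''
    _ < _ := sq_trigammaMajorant_add_tetragammaMajorant_lt hx₀
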